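/- arXiv:1207.0436 — 2 statements merged into one kernel-verified Lean document; each statement's English description precedes it below -/
import Mathlib

section
/- Let P and Q be two probability mass functions on a finite set 𝒳 such that the L₁ norm of their difference satisfies ||P − Q||₁ = Σ_{x∈𝒳} |P(x) − Q(x)| ≤ 1/2. Then the difference between their entropies satisfies |H(P) − H(Q)| ≤ −||P − Q||₁ · log(||P − Q||₁ / |𝒳|). -/
open Real

/-!
Put `η t = -t log t`, which is concave on `[0, 1]` and vanishes at both ends. For `d = |p - q|`,
moving two points symmetrically towards each other does not decrease the sum of their `η`-values;
applied inside `[0, max p q]` and inside `[min p q, 1]` this gives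
`|η p - η q| ≤ max (η d) (η (1 - d))`. For `d ≤ 1 / 2` the maximum is `η d`, by concavity of `log`
at `1 - d`, an average of `1` and `d`. Summing over the alphabet and averaging with Jensen's
inequality turns `∑ η |P x - Q x|` into the claimed bound.
-/

section Concave

lemma smul_add_smul_add_swap {𝕜 M : Type*} [Semiring 𝕜] [AddCommMonoid M] [Module 𝕜 M] {a b : 𝕜}
    (hab : a + b = 1) (x y : M) : (a • x + b • y) + (b • x + a • y) = x + y := by
  rw [add_add_add_comm, ← add_smul, add_comm (b • y), ← add_smul, hab, one_smul, one_smul]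

variable {𝕜 E β : Type*} [AddCommGroup E] [AddCommGroup β] [PartialOrder β]
  [IsOrderedAddMonoid β] {s : Set E} {f : E → β}

lemma map_add_map_le_of_concaveOn_of_mem_segment [Semiring 𝕜] [PartialOrder 𝕜] [Module 𝕜 E]
    [Module 𝕜 β] (hf : ConcaveOn 𝕜 s f) {x y u v : E} (hx : x ∈ s) (hy : y ∈ s)
    (hu : u ∈ segment 𝕜 x y) (huv : u + v = x + y) : f x + f y ≤ f u + f v := by
  obtain ⟨a, b, ha, hb, hab, rfl⟩ := hu
  obtain rfl : v = b • x + a • y :=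
    add_left_cancel (huv.trans (smul_add_smul_add_swap hab x y).symm)
  calc f x + f y = (a • f x + b • f y) + (b • f x + a • f y) :=
        (smul_add_smul_add_swap hab _ _).symm
    _ ≤ f (a • x + b • y) + f (b • x + a • y) :=
        add_le_add (hf.2 hx hy ha hb hab) (hf.2 hx hy hb ha (by rwa [add_comm]))

lemma sum_map_le_card_smul_map_average_of_concaveOn [Field 𝕜] [LinearOrder 𝕜]
    [IsStrictOrderedRing 𝕜] [Module 𝕜 E] [Module 𝕜 β] [IsStrictOrderedModule 𝕜 β]
    (hf : ConcaveOn 𝕜 s f) {ι : Type*} {t : Finset ι} (ht : t.Nonempty) {p : ι → E}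
    (hp : ∀ i ∈ t, p i ∈ s) :
    ∑ i ∈ t, f (p i) ≤ (t.card : 𝕜) • f ((t.card : 𝕜)⁻¹ • ∑ i ∈ t, p i) := by
  have hcard : (0 : 𝕜) < t.card := by exact_mod_cast ht.card_pos
  have jensen := hf.le_map_sum (w := fun _ ↦ (t.card : 𝕜)⁻¹) (fun _ _ ↦ by positivity)
    (by simp [hcard.ne']) hp
  rw [← Finset.smul_sum, ← Finset.smul_sum] at jensen
  rwa [← inv_smul_le_iff_of_pos hcard]

end Concave

lemma abs_map_sub_map_le_max_of_concaveOn_Icc {f : ℝ → ℝ} (hf : ConcaveOn ℝ (Set.Icc 0 1) f)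
    (h0 : f 0 = 0) (h1 : f 1 = 0) {p q : ℝ} (hp : p ∈ Set.Icc 0 1) (hq : q ∈ Set.Icc 0 1) :
    |f p - f q| ≤ max (f |p - q|) (f (1 - |p - q|)) := by
  wlog hqp : q ≤ p generalizing p q
  · simpa only [abs_sub_comm] using this hq hp (le_of_not_ge hqp)
  rw [abs_of_nonneg (sub_nonneg.2 hqp)]
  have hupper : f 0 + f p ≤ f q + f (p - q) :=
    map_add_map_le_of_concaveOn_of_mem_segment hf (by simp) hp
      (Icc_subset_segment ⟨hq.1, hqp⟩) (by ring)
  have hlower : f q + f 1 ≤ f p + f (1 - (p - q)) :=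
    map_add_map_le_of_concaveOn_of_mem_segment hf hq (by simp)
      (Icc_subset_segment ⟨hqp, hp.2⟩) (by ring)
  rw [abs_le']
  exact ⟨le_max_of_le_left (by linarith), le_max_of_le_right (by linarith)⟩

lemma negMulLog_one_sub_le_negMulLog {d : ℝ} (h0 : 0 ≤ d) (h1 : d ≤ 1 / 2) :
    negMulLog (1 - d) ≤ negMulLog d := by
  rcases h0.eq_or_lt with rfl | hd
  · simp
  have hd' : 0 < 1 - d := by linarith
  have havg : (1 - 2 * d) / (1 - d) * 1 + d / (1 - d) * d = 1 - d := by field_simp; ring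
  have hlog := strictConcaveOn_log_Ioi.concaveOn.2 (Set.mem_Ioi.2 one_pos) (Set.mem_Ioi.2 hd)
    (div_nonneg (by linarith : 0 ≤ 1 - 2 * d) hd'.le) (div_nonneg h0 hd'.le) (by field_simp; ring)
  simp only [smul_eq_mul, havg, log_one, mul_zero, zero_add] at hlog
  rw [div_mul_eq_mul_div, div_le_iff₀' hd'] at hlog
  simpa only [negMulLog, neg_mul, neg_le_neg_iff] using hlog

lemma abs_negMulLog_sub_negMulLog_le {p q : ℝ} (hp : p ∈ Set.Icc 0 1) (hq : q ∈ Set.Icc 0 1)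
    (hpq : |p - q| ≤ 1 / 2) : |negMulLog p - negMulLog q| ≤ negMulLog |p - q| :=
  (abs_map_sub_map_le_max_of_concaveOn_Icc
    (concaveOn_negMulLog.subset Set.Icc_subset_Ici_self (convex_Icc 0 1))
    negMulLog_zero negMulLog_one hp hq).trans
    (max_le le_rfl (negMulLog_one_sub_le_negMulLog (abs_nonneg _) hpq))

lemma sum_negMulLog_le {ι : Type*} {t : Finset ι} (ht : t.Nonempty) {p : ι → ℝ}
    (hp : ∀ i ∈ t, 0 ≤ p i) :
    ∑ i ∈ t, negMulLog (p i) ≤ -(∑ i ∈ t, p i) * log ((∑ i ∈ t, p i) / t.card) := by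
  have hcard : (t.card : ℝ) ≠ 0 := by exact_mod_cast ht.card_ne_zero
  calc ∑ i ∈ t, negMulLog (p i)
      ≤ t.card * negMulLog ((t.card : ℝ)⁻¹ * ∑ i ∈ t, p i) :=
        sum_map_le_card_smul_map_average_of_concaveOn concaveOn_negMulLog ht hp
    _ = -(∑ i ∈ t, p i) * log ((∑ i ∈ t, p i) / t.card) := by
        rw [inv_mul_eq_div, negMulLog]
        field_simp

theorem entropy_diff_L1_bound_general {𝒳 : Type*} [Fintype 𝒳] [Nonempty 𝒳] {P Q : 𝒳 → ℝ}
    (hP : ∀ x, P x ∈ Set.Icc 0 1) (hQ : ∀ x, Q x ∈ Set.Icc 0 1)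
    (hPQ : ∀ x, |P x - Q x| ≤ 1 / 2) :
    |(∑ x, negMulLog (P x)) - ∑ x, negMulLog (Q x)|
      ≤ -(∑ x, |P x - Q x|) * log ((∑ x, |P x - Q x|) / Fintype.card 𝒳) :=
  calc |(∑ x, negMulLog (P x)) - ∑ x, negMulLog (Q x)|
      = |∑ x, (negMulLog (P x) - negMulLog (Q x))| := by rw [Finset.sum_sub_distrib]
    _ ≤ ∑ x, |negMulLog (P x) - negMulLog (Q x)| := Finset.abs_sum_le_sum_abs _ _
    _ ≤ ∑ x, negMulLog |P x - Q x| :=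
        Finset.sum_le_sum fun x _ ↦ abs_negMulLog_sub_negMulLog_le (hP x) (hQ x) (hPQ x)
    _ ≤ -(∑ x, |P x - Q x|) * log ((∑ x, |P x - Q x|) / Fintype.card 𝒳) :=
        sum_negMulLog_le Finset.univ_nonempty fun x _ ↦ abs_nonneg (P x - Q x)

/-- **L₁ bound on the entropy difference** (Cover–Thomas, Theorem 17.3.3).
If `P` and `Q` are probability mass functions on a finite set `𝒳` with
`‖P − Q‖₁ = ∑ x, |P x − Q x| ≤ 1/2`, then
`|H(P) − H(Q)| ≤ −‖P − Q‖₁ · log(‖P − Q‖₁ / |𝒳|)`,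
where `H(P) = −∑ x, P x * log (P x)` (natural logarithm). -/
theorem entropy_diff_L1_bound
    {𝒳 : Type*} [Fintype 𝒳] (P Q : 𝒳 → ℝ)
    (hP_nonneg : ∀ x, 0 ≤ P x) (hP_sum : ∑ x, P x = 1)
    (hQ_nonneg : ∀ x, 0 ≤ Q x) (hQ_sum : ∑ x, Q x = 1)
    (hL1 : ∑ x, |P x - Q x| ≤ 1 / 2) :
    |(∑ x, Real.negMulLog (P x)) - ∑ x, Real.negMulLog (Q x)|
      ≤ -(∑ x, |P x - Q x|) * Real.log ((∑ x, |P x - Q x|) / (Fintype.card 𝒳)) := by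
  obtain ⟨x₀, -⟩ := Finset.nonempty_of_sum_ne_zero (hP_sum.trans_ne one_ne_zero)
  have : Nonempty 𝒳 := ⟨x₀⟩
  exact entropy_diff_L1_bound_general (mem_Icc_of_mem_stdSimplex ⟨hP_nonneg, hP_sum⟩)
    (mem_Icc_of_mem_stdSimplex ⟨hQ_nonneg, hQ_sum⟩) fun x ↦
      (Finset.single_le_sum (fun y _ ↦ abs_nonneg (P y - Q y)) (Finset.mem_univ x)).trans hL1
end

section
/- For every λ > 0, the entropy of the Binomial(n, λ/n) distribution converges, as n → ∞, to the entropy of the Poisson distribution with mean λ: lim_{n→∞} H(Binomial(n, λ/n)) = H(Po(λ)). -/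
open Real Filter

/-- The Poisson probability mass function with mean `lam`. -/
noncomputable def poissonPMF (lam : ℝ) (k : ℕ) : ℝ :=
  Real.exp (-lam) * lam ^ k / (Nat.factorial k)

/-- The Binomial(n, p) probability mass function (it vanishes for `k > n`). -/
noncomputable def binomialPMF (n : ℕ) (p : ℝ) (k : ℕ) : ℝ :=
  (n.choose k : ℝ) * p ^ k * (1 - p) ^ (n - k)

/-- The entropy (in nats) of a pmf on the non-negative integers. -/
noncomputable def entropyPMF (p : ℕ → ℝ) : ℝ := ∑' k, Real.negMulLog (p k)

/-! The Poisson limit theorem gives convergence of the summands of the entropy, so only dominated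
convergence is at issue. If `n * p n ≤ r`, the binomial masses are at most `r ^ k / k!`, and since
`-x log x ≤ 2 √x` for `x ≥ 0`, the entropy summands are at most `2 √(r ^ k / k!)`, which is
summable in `k`. -/

lemma negMulLog_le_two_mul_sqrt {x : ℝ} (hx : 0 ≤ x) : negMulLog x ≤ 2 * √x := by
  have h_sqrt : negMulLog √x ≤ 1 :=
    (negMulLog_le_one_sub_self (sqrt_nonneg x)).trans (sub_le_self 1 (sqrt_nonneg x))
  calc negMulLog x = negMulLog (√x * √x) := by rw [mul_self_sqrt hx]
    _ = 2 * (√x * negMulLog √x) := by rw [negMulLog_mul]; ring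
    _ ≤ 2 * √x := by gcongr; exact mul_le_of_le_one_right (sqrt_nonneg x) h_sqrt

lemma norm_negMulLog_le_two_mul_sqrt {x : ℝ} (hx : x ∈ Set.Icc 0 1) :
    ‖negMulLog x‖ ≤ 2 * √x := by
  rw [norm_of_nonneg (negMulLog_nonneg hx.1 hx.2)]
  exact negMulLog_le_two_mul_sqrt hx.1

theorem tendsto_entropyPMF_of_summable_sqrt {ι : Type*} {l : Filter ι} {P : ι → ℕ → ℝ}
    {Q bound : ℕ → ℝ} (h_bound : Summable fun k => √(bound k))
    (h_lim : ∀ k, Tendsto (P · k) l (nhds (Q k)))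
    (h_mem : ∀ᶠ i in l, ∀ k, P i k ∈ Set.Icc 0 1) (h_le : ∀ᶠ i in l, ∀ k, P i k ≤ bound k) :
    Tendsto (fun i => entropyPMF (P i)) l (nhds (entropyPMF Q)) := by
  refine tendsto_tsum_of_dominated_convergence (h_bound.mul_left 2)
    (fun k => (continuous_negMulLog.tendsto _).comp (h_lim k)) ?_
  filter_upwards [h_mem, h_le] with i hi_mem hi_le k
  exact (norm_negMulLog_le_two_mul_sqrt (hi_mem k)).trans (by gcongr; exact hi_le k)

lemma summable_sqrt_pow_div_factorial {r : ℝ} (hr : 0 ≤ r) :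
    Summable fun k : ℕ => √(r ^ k / k.factorial) := by
  have h_major : Summable fun k : ℕ => (2 * r) ^ k / k.factorial + (1 / 2 : ℝ) ^ k :=
    (summable_pow_div_factorial (2 * r)).add summable_geometric_two
  refine h_major.of_nonneg_of_le (fun k => sqrt_nonneg _) fun k => ?_
  have h_nonneg : 0 ≤ r ^ k / k.factorial := by positivity
  calc √(r ^ k / k.factorial) ≤ 2 * √(r ^ k / k.factorial) * 1 := by
        linarith [sqrt_nonneg (r ^ k / k.factorial)]
    _ ≤ 2 ^ k * √(r ^ k / k.factorial) ^ 2 + (2 ^ k)⁻¹ * 1 ^ 2 :=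
        two_mul_le_add_mul_sq (by positivity)
    _ = (2 * r) ^ k / k.factorial + (1 / 2) ^ k := by
        rw [sq_sqrt h_nonneg, mul_pow, one_div, inv_pow]; ring

section Binomial

variable {p : ℝ}

lemma binomialPMF_mem_Icc (hp : p ∈ Set.Icc 0 1) (n k : ℕ) :
    binomialPMF n p k ∈ Set.Icc 0 1 := by
  have h_measure : (ProbabilityTheory.binomial n ⟨p, hp⟩).real {k} = binomialPMF n p k :=
    ProbabilityTheory.binomial_real_singleton n k ⟨p, hp⟩
  rw [← h_measure]
  exact ⟨MeasureTheory.measureReal_nonneg, MeasureTheory.measureReal_le_one⟩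

lemma binomialPMF_le_pow_div_factorial (hp : p ∈ Set.Icc 0 1) (n k : ℕ) :
    binomialPMF n p k ≤ (n * p) ^ k / k.factorial := by
  have h_nonneg : 0 ≤ p := hp.1
  calc binomialPMF n p k ≤ n.choose k * p ^ k :=
        mul_le_of_le_one_right (by positivity)
          (pow_le_one₀ (sub_nonneg.mpr hp.2) (sub_le_self 1 hp.1))
    _ ≤ n ^ k / k.factorial * p ^ k := by gcongr; exact Nat.choose_le_pow_div k n
    _ = (n * p) ^ k / k.factorial := by ring

end Binomial

theorem entropy_binomial_tendsto_entropy_poisson_general {p : ℕ → ℝ} {lam : ℝ}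
    (hp : ∀ᶠ n in atTop, 0 ≤ p n) (h_mean : Tendsto (fun n : ℕ => n * p n) atTop (nhds lam)) :
    Tendsto (fun n => entropyPMF (binomialPMF n (p n))) atTop
      (nhds (entropyPMF (poissonPMF lam))) := by
  have hp_lim : Tendsto p atTop (nhds 0) :=
    ProbabilityTheory.tendsto_zero_of_tendsto_mul_atTop h_mean
  have hp_mem : ∀ᶠ n in atTop, p n ∈ Set.Icc 0 1 :=
    hp.and (hp_lim.eventually_le_const one_pos)
  have h_mean_le : ∀ᶠ n : ℕ in atTop, n * p n ≤ lam + 1 :=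
    h_mean.eventually_le_const (lt_add_one lam)
  have h_lam : 0 ≤ lam :=
    ge_of_tendsto h_mean (hp.mono fun n hn => mul_nonneg n.cast_nonneg hn)
  refine tendsto_entropyPMF_of_summable_sqrt
    (summable_sqrt_pow_div_factorial (add_nonneg h_lam zero_le_one))
    (fun k => ProbabilityTheory.tendsto_choose_mul_pow_of_tendsto_mul_atTop k h_mean)
    (hp_mem.mono fun n hn => binomialPMF_mem_Icc hn n) ?_
  filter_upwards [hp_mem, h_mean_le] with n hn h_le k
  have h_nonneg : 0 ≤ n * p n := mul_nonneg n.cast_nonneg hn.1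
  exact (binomialPMF_le_pow_div_factorial hn n k).trans (by gcongr)

lemma tendsto_natCast_mul_div_natCast (c : ℝ) :
    Tendsto (fun n : ℕ => n * (c / n)) atTop (nhds c) := by
  refine tendsto_const_nhds.congr' ?_
  filter_upwards [eventually_ne_atTop 0] with n hn
  exact (mul_div_cancel₀ c (Nat.cast_ne_zero.mpr hn)).symm

/-- For every `λ > 0`, the entropy of the `Binomial(n, λ/n)` distribution converges,
as `n → ∞`, to the entropy of the Poisson distribution with mean `λ`. -/
theorem entropy_binomial_tendsto_entropy_poisson
    (lam : ℝ) (hlam_pos : 0 < lam) :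
    Tendsto (fun n : ℕ => entropyPMF (binomialPMF n (lam / n))) atTop
      (nhds (entropyPMF (poissonPMF lam))) := by
  exact entropy_binomial_tendsto_entropy_poisson_general (.of_forall fun n => by positivity)
    (tendsto_natCast_mul_div_natCast lam)
end
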